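/- arXiv:2104.06836 — 2 statements merged into one kernel-verified Lean document; each statement's English description precedes it below -/
import Mathlib

section
/- Let E be a real vector space, f : ℝ × E → E, u⁰ ∈ E, t ∈ ℝ, and Δt ∈ ℝ. Define the low-storage sweep u₁ = u⁰ + (Δt/2) f(t, u⁰), u₂ = u₁ + (Δt/2) f(t + Δt/2, u₁), u₃ = u₂ + (Δt/2) f(t + Δt, u₂), u₄ = (2/3) u⁰ + (1/3) u₃, u₅ = u₄ + (Δt/2) f(t + Δt/2, u₄). Define the Butcher-form stage derivatives k₁ = f(t, u⁰), k₂ = f(t + Δt/2, u⁰ + (Δt/2) k₁), k₃ = f(t + Δt, u⁰ + (Δt/2)(k₁ + k₂)), k₄ = f(t + Δt/2, u⁰ + (Δt/6)(k₁ + k₂ + k₃)). Then u₅ = u⁰ + Δt ((1/6) k₁ + (1/6) k₂ + (1/6) k₃ + (1/2) k₄); i.e., the low-storage implementation reproduces the main solution of the method SSP3(2)4 with Butcher coefficients c = (0, 1/2, 1, 1/2), a_{21} = 1/2, a_{31} = a_{32} = 1/2, a_{41} = a_{42} = a_{43} = 1/6, b = (1/6, 1/6, 1/6, 1/2). -/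
/-- The low-storage implementation of SSP3(2)4 reproduces the main solution of
the method in Butcher form. -/
theorem ssp43_low_storage_main_solution
    {E : Type*} [AddCommGroup E] [Module ℝ E]
    (f : ℝ × E → E) (u0 : E) (t Δt : ℝ)
    (u1 u2 u3 u4 u5 : E) (k1 k2 k3 k4 : E)
    (hu1 : u1 = u0 + (Δt/2) • f (t, u0))
    (hu2 : u2 = u1 + (Δt/2) • f (t + Δt/2, u1))
    (hu3 : u3 = u2 + (Δt/2) • f (t + Δt, u2))
    (hu4 : u4 = (2/3 : ℝ) • u0 + (1/3 : ℝ) • u3)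
    (hu5 : u5 = u4 + (Δt/2) • f (t + Δt/2, u4))
    (hk1 : k1 = f (t, u0))
    (hk2 : k2 = f (t + Δt/2, u0 + (Δt/2) • k1))
    (hk3 : k3 = f (t + Δt, u0 + (Δt/2) • (k1 + k2)))
    (hk4 : k4 = f (t + Δt/2, u0 + (Δt/6) • (k1 + k2 + k3))) :
    u5 = u0 + Δt • ((1/6 : ℝ) • k1 + (1/6 : ℝ) • k2 + (1/6 : ℝ) • k3 + (1/2 : ℝ) • k4) := by
  rw [← hk1] at hu1
  rw [← hu1] at hk2
  rw [← hk2] at hu2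
  have e2 : u2 = u0 + (Δt/2) • (k1 + k2) := by
    rw [hu2, hu1]; module
  rw [← e2] at hk3
  rw [← hk3] at hu3
  have e4 : u4 = u0 + (Δt/6) • (k1 + k2 + k3) := by
    rw [hu4, hu3, e2]; module
  rw [← e4] at hk4
  rw [← hk4] at hu5
  rw [hu5, e4]; module
end

section
/- Let α ≠ 0 and V_f ∈ (0,1), and let V : ℝ → ℝ be differentiable with V(x) ∈ (V_f, 1) for all x. Suppose V satisfies the implicit relation x − (α/2) ( log((1 − V(x))(V(x) − V_f)) + ((1 + V_f)/(1 − V_f)) log((1 − V(x))/(V(x) − V_f)) ) = 0 for all x ∈ ℝ. Then V solves the viscous shock momentum ODE α V(x) V'(x) − (V(x) − 1)(V(x) − V_f) = 0 for all x ∈ ℝ. -/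
/-- A differentiable momentum profile `V` with values in `(V_f, 1)` satisfying the
implicit viscous-shock relation solves the viscous shock momentum ODE
`α V V' − (V − 1)(V − V_f) = 0`. -/
theorem viscous_shock_implicit_relation_solves_ode
    (α Vf : ℝ) (hα : α ≠ 0) (hVf : Vf ∈ Set.Ioo (0 : ℝ) 1)
    (V : ℝ → ℝ) (hV : Differentiable ℝ V)
    (hrange : ∀ x, V x ∈ Set.Ioo Vf 1)
    (himplicit : ∀ x, x - (α/2) *
      (Real.log ((1 - V x) * (V x - Vf))
        + ((1 + Vf)/(1 - Vf)) * Real.log ((1 - V x)/(V x - Vf))) = 0) :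
    ∀ x, α * V x * deriv V x - (V x - 1) * (V x - Vf) = 0 := by
  intro x
  obtain ⟨h1, h2⟩ := hrange x
  have p1 : 1 - V x ≠ 0 := by linarith
  have p2 : V x - Vf ≠ 0 := by linarith
  have p3 : 1 - Vf ≠ 0 := by linarith [hVf.2]
  have hd := (hV x).hasDerivAt
  have dA := (hd.const_sub 1).log p1
  have dB := (hd.sub_const Vf).log p2
  have dF := ((dA.add dB).add ((dA.sub dB).const_mul ((1 + Vf)/(1 - Vf)))).const_mul (α/2)
  have dI := dF.congr_of_eventuallyEq (f₁ := fun y => y) (Filter.Eventually.of_forall (fun y => by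
    have q1 : 1 - V y ≠ 0 := by linarith [(hrange y).2]
    have q2 : V y - Vf ≠ 0 := by linarith [(hrange y).1]
    have h := himplicit y
    rw [Real.log_mul q1 q2, Real.log_div q1 q2] at h
    simp only [Pi.add_apply, Pi.sub_apply]
    linarith))
  have key := dI.unique (hasDerivAt_id' x)
  field_simp at key
  have h2 : (1 - Vf) * (α * V x * deriv V x - (V x - 1) * (V x - Vf)) = 0 := by
    linarith
  exact (mul_eq_zero.mp h2).resolve_left p3
end
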